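/- arXiv:1511.03724 — 3 statements merged into one kernel-verified Lean document; each statement's English description precedes it below -/
import Mathlib

section
/- Fix a real t > 0 and an integer n ≥ 0, set w̄ₙ = (n+1)π/t, and let F denote F₊ if n is even and F₋ if n is odd. Then there exist sₙ > 0 and C > 0 such that for every s ∈ (0, sₙ) there is exactly one w(s) ∈ ℂ with nπ/t < Re w(s) < (n+1)π/t and F(s,t;w(s)) = 0, and this zero satisfies |w(s) − w̄ₙ·(1 − s/t + (s/t)² − i·(s²/(2t))·w̄ₙ)| ≤ C·s³. -/
open Real

/-- `F₊(s,t;w) = 1 + i(1 + e^{itw})/(sw)` -/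
noncomputable def Fplus (s t : ℝ) (w : ℂ) : ℂ :=
  1 + Complex.I * (1 + Complex.exp (Complex.I * t * w)) / (s * w)

/-- `F₋(s,t;w) = 1 + i(1 − e^{itw})/(sw)` -/
noncomputable def Fminus (s t : ℝ) (w : ℂ) : ℂ :=
  1 + Complex.I * (1 - Complex.exp (Complex.I * t * w)) / (s * w)

/-!
In the coordinate `u = i(tw - N)`, `N = (n + 1)π`, both parities give the same equation
`e^u = 1 - a(u + iN)` with `a = s / t`. For small `a` its solutions in the strip `-π < Im u < 0`
are exactly those in the closed unit disc: comparing moduli gives `0 ≤ Re u ≤ 1` in the strip, so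
the right-hand side is close to `1` and `u`, being its principal logarithm, is small; conversely,
the imaginary part of the equation forces `sin (Im u) < 0`. On the unit disc
`u ↦ log (1 - a(u + iN))` is a contraction, which gives existence and uniqueness, and expanding
the logarithm to second order gives the asymptotics.
-/

section FixedPoint

open Set Function NNReal

theorem existsUnique_mem_isFixedPt_of_lipschitzOnWith {α : Type*} [MetricSpace α] {K : ℝ≥0}
    {f : α → α} {s : Set α} (hs : IsComplete s) (hne : s.Nonempty) (hf : MapsTo f s s)
    (hK : K < 1) (hLip : LipschitzOnWith K f s) : ∃! x, x ∈ s ∧ IsFixedPt f x := by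
  have hcontr : ContractingWith K (hf.restrict f s s) := ⟨hK, hLip.mapsToRestrict hf⟩
  have : CompleteSpace s := hs.completeSpace_coe
  have : Nonempty s := hne.to_subtype
  refine ⟨hcontr.fixedPoint _, ⟨Subtype.property _, ?_⟩, ?_⟩
  · exact congrArg Subtype.val hcontr.fixedPoint_isFixedPt
  · rintro y ⟨hy, hfix⟩
    exact congrArg Subtype.val (hcontr.fixedPoint_unique (x := ⟨y, hy⟩) (Subtype.ext hfix))

end FixedPoint

section Logarithm

theorem norm_log_sub_log_le_of_mem_closedBall {r : ℝ} (hr : r < 1) {x y : ℂ}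
    (hx : x ∈ Metric.closedBall 1 r) (hy : y ∈ Metric.closedBall 1 r) :
    ‖Complex.log x - Complex.log y‖ ≤ (1 - r)⁻¹ * ‖x - y‖ := by
  have re_ge : ∀ z ∈ Metric.closedBall (1 : ℂ) r, 1 - r ≤ z.re := by
    intro z hz
    have h := (Complex.abs_re_le_norm (z - 1)).trans (mem_closedBall_iff_norm.mp hz)
    rw [Complex.sub_re, Complex.one_re] at h
    linarith [neg_le_of_abs_le h]
  refine (convex_closedBall (1 : ℂ) r).norm_image_sub_le_of_norm_hasDerivWithin_le
    (f' := fun z => z⁻¹) (fun z hz => ?_) (fun z hz => ?_) hy hx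
  · exact (Complex.hasDerivAt_log (Or.inl (by linarith [re_ge z hz]))).hasDerivWithinAt
  · rw [norm_inv]
    exact inv_anti₀ (sub_pos.mpr hr) ((re_ge z hz).trans (Complex.re_le_norm z))

theorem log_eq_iff_exp_eq {x u : ℂ} (hx : x ≠ 0) (hu : u.im ∈ Set.Ioc (-π) π) :
    Complex.log x = u ↔ Complex.exp u = x :=
  ⟨fun h => h ▸ Complex.exp_log hx, fun h => h ▸ Complex.log_exp hu.1 hu.2⟩

theorem inv_one_sub_le_two {x : ℝ} (hx : x ≤ 1 / 2) : (1 - x)⁻¹ ≤ 2 := by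
  rw [inv_le_comm₀ (by linarith) two_pos]
  linarith

theorem norm_log_one_add_sub_self_le_sq {z : ℂ} (hz : ‖z‖ ≤ 1 / 2) :
    ‖Complex.log (1 + z) - z‖ ≤ ‖z‖ ^ 2 := by
  calc ‖Complex.log (1 + z) - z‖
      ≤ ‖z‖ ^ 2 * (1 - ‖z‖)⁻¹ / 2 := Complex.norm_log_one_add_sub_self_le (by linarith)
    _ ≤ ‖z‖ ^ 2 * 2 / 2 := by gcongr; exact inv_one_sub_le_two hz
    _ = ‖z‖ ^ 2 := by ring

theorem norm_log_one_add_sub_quadratic_le_cube {z : ℂ} (hz : ‖z‖ ≤ 1 / 2) :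
    ‖Complex.log (1 + z) - (z - z ^ 2 / 2)‖ ≤ ‖z‖ ^ 3 := by
  have hTaylor : Complex.logTaylor 3 z = z - z ^ 2 / 2 := by
    simp only [Complex.logTaylor_succ, Complex.logTaylor_zero, Pi.add_apply, Nat.cast_zero,
      div_zero, zero_add]
    push_cast
    ring
  calc ‖Complex.log (1 + z) - (z - z ^ 2 / 2)‖
      ≤ ‖z‖ ^ 3 * (1 - ‖z‖)⁻¹ / 3 := by
        simpa [hTaylor, show (2 : ℝ) + 1 = 3 by norm_num] using
          Complex.norm_log_sub_logTaylor_le 2 (z := z) (by linarith)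
    _ ≤ ‖z‖ ^ 3 * 3 / 3 := by gcongr; linarith [inv_one_sub_le_two hz]
    _ = ‖z‖ ^ 3 := by ring

end Logarithm

theorem im_mem_Ioo_neg_pi_pi_of_norm_le_one {u : ℂ} (hu : ‖u‖ ≤ 1) : u.im ∈ Set.Ioo (-π) π :=
  abs_lt.mp (((Complex.abs_im_le_norm u).trans hu).trans_lt (by linarith [Real.pi_gt_three]))

theorem norm_mul_add_le {R : Type*} [NonUnitalSeminormedRing R] (a b : R) {u : R}
    (hu : ‖u‖ ≤ 1) : ‖a * (u + b)‖ ≤ ‖a‖ * (‖b‖ + 1) := by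
  calc ‖a * (u + b)‖ ≤ ‖a‖ * ‖u + b‖ := norm_mul_le _ _
    _ ≤ ‖a‖ * (‖b‖ + 1) := by
      gcongr
      linarith [norm_add_le u b]

section ExpEqAffine

variable {a b u : ℂ}

theorem log_one_sub_mul_add_eq_iff (h : ‖a‖ * (‖b‖ + 1) < 1) (hu : ‖u‖ ≤ 1) :
    Complex.log (1 - a * (u + b)) = u ↔ Complex.exp u = 1 - a * (u + b) := by
  refine log_eq_iff_exp_eq (sub_ne_zero.mpr fun hone => ?_)
    (Set.Ioo_subset_Ioc_self (im_mem_Ioo_neg_pi_pi_of_norm_le_one hu))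
  have hnorm := norm_mul_add_le a b hu
  rw [← hone, norm_one] at hnorm
  linarith

theorem lipschitzOnWith_log_one_sub_mul_add (h : ‖a‖ * (‖b‖ + 1) ≤ 1 / 2) :
    LipschitzOnWith (2 * ‖a‖₊) (fun u => Complex.log (1 - a * (u + b)))
      (Metric.closedBall 0 1) := by
  have affine_mem : ∀ u ∈ Metric.closedBall (0 : ℂ) 1,
      1 - a * (u + b) ∈ Metric.closedBall (1 : ℂ) (1 / 2) := by
    intro u hu
    rw [mem_closedBall_iff_norm, sub_sub_cancel_left, norm_neg]
    exact (norm_mul_add_le a b (mem_closedBall_zero_iff.mp hu)).trans h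
  refine LipschitzOnWith.of_dist_le_mul fun u hu w hw => ?_
  have hlog := norm_log_sub_log_le_of_mem_closedBall one_half_lt_one
    (affine_mem u hu) (affine_mem w hw)
  rw [show 1 - a * (u + b) - (1 - a * (w + b)) = -(a * (u - w)) by ring, norm_neg,
    norm_mul] at hlog
  rw [dist_eq_norm, dist_eq_norm]
  push_cast
  linarith

theorem mapsTo_log_one_sub_mul_add (h : ‖a‖ * (‖b‖ + 1) ≤ 1 / 2) :
    Set.MapsTo (fun u => Complex.log (1 - a * (u + b)))
      (Metric.closedBall 0 1) (Metric.closedBall 0 1) := by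
  intro u hu
  rw [mem_closedBall_zero_iff] at hu ⊢
  have hv := (norm_neg (a * (u + b))).trans_le (norm_mul_add_le a b hu)
  have hlog := Complex.norm_log_one_add_half_le_self (hv.trans h)
  rw [← sub_eq_add_neg] at hlog
  exact hlog.trans (by linarith)

theorem existsUnique_exp_eq_one_sub_mul_add (h : ‖a‖ * (‖b‖ + 1) < 1 / 2) :
    ∃! u : ℂ, ‖u‖ ≤ 1 ∧ Complex.exp u = 1 - a * (u + b) := by
  have hcontr : 2 * ‖a‖₊ < 1 := by
    rw [← NNReal.coe_lt_coe]
    push_cast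
    linarith [mul_nonneg (norm_nonneg a) (norm_nonneg b)]
  refine (existsUnique_congr fun u => ?_).mp <| existsUnique_mem_isFixedPt_of_lipschitzOnWith
    Metric.isClosed_closedBall.isComplete ⟨0, by simp⟩ (mapsTo_log_one_sub_mul_add h.le) hcontr
    (lipschitzOnWith_log_one_sub_mul_add h.le)
  rw [mem_closedBall_zero_iff]
  exact and_congr_right (log_one_sub_mul_add_eq_iff (by linarith))

theorem norm_mul_le_of_exp_eq_one_sub_mul_add (h : ‖a‖ * (‖b‖ + 1) ≤ 1 / 2) (hu : ‖u‖ ≤ 1)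
    (hexp : Complex.exp u = 1 - a * (u + b)) :
    ‖a * u‖ ≤ 3 / 2 * (‖a‖ * (‖b‖ + 1)) ^ 2 := by
  have hv := (norm_neg (a * (u + b))).trans_le (norm_mul_add_le a b hu)
  have hlog := Complex.norm_log_one_add_half_le_self (hv.trans h)
  rw [← sub_eq_add_neg, (log_one_sub_mul_add_eq_iff (by linarith) hu).mpr hexp] at hlog
  have ha : ‖a‖ ≤ ‖a‖ * (‖b‖ + 1) := le_mul_of_one_le_right (norm_nonneg a) (by simp)
  calc ‖a * u‖ = ‖a‖ * ‖u‖ := norm_mul a u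
    _ ≤ (‖a‖ * (‖b‖ + 1)) * (3 / 2 * (‖a‖ * (‖b‖ + 1))) := by
      gcongr
      linarith
    _ = 3 / 2 * (‖a‖ * (‖b‖ + 1)) ^ 2 := by ring

theorem norm_add_mul_le_of_exp_eq_one_sub_mul_add (h : ‖a‖ * (‖b‖ + 1) ≤ 1 / 2) (hu : ‖u‖ ≤ 1)
    (hexp : Complex.exp u = 1 - a * (u + b)) :
    ‖u + a * b‖ ≤ 5 / 2 * (‖a‖ * (‖b‖ + 1)) ^ 2 := by
  have hv := (norm_neg (a * (u + b))).trans_le (norm_mul_add_le a b hu)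
  have hR := norm_log_one_add_sub_self_le_sq (hv.trans h)
  rw [← sub_eq_add_neg, (log_one_sub_mul_add_eq_iff (by linarith) hu).mpr hexp] at hR
  calc ‖u + a * b‖ = ‖(u - -(a * (u + b))) - a * u‖ := by ring_nf
    _ ≤ ‖-(a * (u + b))‖ ^ 2 + 3 / 2 * (‖a‖ * (‖b‖ + 1)) ^ 2 :=
      norm_sub_le_of_le hR (norm_mul_le_of_exp_eq_one_sub_mul_add h hu hexp)
    _ ≤ (‖a‖ * (‖b‖ + 1)) ^ 2 + 3 / 2 * (‖a‖ * (‖b‖ + 1)) ^ 2 := by gcongr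
    _ = 5 / 2 * (‖a‖ * (‖b‖ + 1)) ^ 2 := by ring

theorem norm_sub_quadratic_le_of_exp_eq_one_sub_mul_add (h : ‖a‖ * (‖b‖ + 1) ≤ 1 / 2) (hu : ‖u‖ ≤ 1)
    (hexp : Complex.exp u = 1 - a * (u + b)) :
    ‖u - (-(a * b) + a ^ 2 * b - a ^ 2 * b ^ 2 / 2)‖ ≤ 5 * (‖a‖ * (‖b‖ + 1)) ^ 3 := by
  have hv := (norm_neg (a * (u + b))).trans_le (norm_mul_add_le a b hu)
  have hR := norm_log_one_add_sub_quadratic_le_cube (hv.trans h)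
  rw [← sub_eq_add_neg, (log_one_sub_mul_add_eq_iff (by linarith) hu).mpr hexp] at hR
  have hau := norm_mul_le_of_exp_eq_one_sub_mul_add h hu hexp
  have hfirst := norm_add_mul_le_of_exp_eq_one_sub_mul_add h hu hexp
  have ha : ‖a‖ ≤ ‖a‖ * (‖b‖ + 1) := le_mul_of_one_le_right (norm_nonneg a) (by simp)
  have hab : ‖a * b‖ ≤ ‖a‖ * (‖b‖ + 1) := by
    rw [norm_mul]
    gcongr
    simp
  have hδ : 0 ≤ ‖a‖ * (‖b‖ + 1) := by positivity
  generalize ‖a‖ * (‖b‖ + 1) = δ at *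
  have hlinear : ‖a * (u + a * b)‖ ≤ 5 / 2 * δ ^ 3 := by
    calc ‖a * (u + a * b)‖ = ‖a‖ * ‖u + a * b‖ := norm_mul _ _
      _ ≤ δ * (5 / 2 * δ ^ 2) := by gcongr
      _ = 5 / 2 * δ ^ 3 := by ring
  have hsquare : ‖a * u * (-(a * (u + b)) - a * b) / 2‖ ≤ 3 / 2 * δ ^ 3 := by
    calc ‖a * u * (-(a * (u + b)) - a * b) / 2‖
        = ‖a * u‖ * ‖-(a * (u + b)) - a * b‖ / 2 := by
          rw [norm_div, norm_mul (a * u), Complex.norm_ofNat]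
      _ ≤ 3 / 2 * δ ^ 2 * (δ + δ) / 2 := by
          gcongr
          exact norm_sub_le_of_le hv hab
      _ = 3 / 2 * δ ^ 3 := by ring
  calc ‖u - (-(a * b) + a ^ 2 * b - a ^ 2 * b ^ 2 / 2)‖
      = ‖(u - (-(a * (u + b)) - (-(a * (u + b))) ^ 2 / 2)) - a * (u + a * b)
          + a * u * (-(a * (u + b)) - a * b) / 2‖ := by ring_nf
    _ ≤ ‖-(a * (u + b))‖ ^ 3 + 5 / 2 * δ ^ 3 + 3 / 2 * δ ^ 3 :=
        norm_add_le_of_le (norm_sub_le_of_le hR hlinear) hsquare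
    _ ≤ δ ^ 3 + 5 / 2 * δ ^ 3 + 3 / 2 * δ ^ 3 := by gcongr
    _ = 5 * δ ^ 3 := by ring

end ExpEqAffine

section Strip

variable {a N : ℝ} {u : ℂ}

theorem re_nonneg_of_exp_eq_one_sub_mul_add_mul_I (ha : 0 ≤ a)
    (hexp : Complex.exp u = 1 - a * (u + N * Complex.I)) :
    0 ≤ u.re := by
  by_contra! hneg
  have hre : (1 - a * (u + N * Complex.I)).re = 1 - a * u.re := by simp
  have hnorm := Complex.re_le_norm (1 - a * (u + N * Complex.I))
  rw [hre, ← hexp, Complex.norm_exp] at hnorm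
  linarith [Real.exp_lt_one_iff.mpr hneg, mul_nonpos_of_nonneg_of_nonpos ha hneg.le]

theorem norm_add_mul_I_le (hre : 0 ≤ u.re) (him : |u.im + N| ≤ N) :
    ‖u + N * Complex.I‖ ≤ u.re + N := by
  have h := Complex.norm_le_abs_re_add_abs_im (u + N * Complex.I)
  simp only [Complex.add_re, Complex.re_ofReal_mul, Complex.I_re, mul_zero, add_zero,
    Complex.add_im, Complex.im_ofReal_mul, Complex.I_im, mul_one, abs_of_nonneg hre] at h
  linarith

theorem re_le_one_of_exp_eq_one_sub_mul_add_mul_I (ha : 0 ≤ a) (haN : a * (N + 1) < 1)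
    (him : |u.im + N| ≤ N) (hexp : Complex.exp u = 1 - a * (u + N * Complex.I)) :
    u.re ≤ 1 := by
  have hre := re_nonneg_of_exp_eq_one_sub_mul_add_mul_I ha hexp
  have hgrowth : u.re + 1 ≤ 1 + a * (u.re + N) := by
    calc u.re + 1 ≤ Real.exp u.re := Real.add_one_le_exp _
      _ = ‖1 - a * (u + N * Complex.I)‖ := by rw [← hexp, Complex.norm_exp]
      _ ≤ 1 + a * (u.re + N) := by
        refine norm_sub_le_of_le norm_one.le ?_
        rw [norm_mul, Complex.norm_of_nonneg ha]
        gcongr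
        exact norm_add_mul_I_le hre him
  have hN : 0 ≤ N := (abs_nonneg _).trans him
  nlinarith [mul_nonneg ha hN]

theorem norm_le_one_of_exp_eq_one_sub_mul_add_mul_I (ha : 0 ≤ a) (haN : a * (N + 1) ≤ 1 / 2)
    (hu : u.im ∈ Set.Ioc (-π) π) (him : |u.im + N| ≤ N)
    (hexp : Complex.exp u = 1 - a * (u + N * Complex.I)) : ‖u‖ ≤ 1 := by
  have hre₀ := re_nonneg_of_exp_eq_one_sub_mul_add_mul_I ha hexp
  have hre₁ := re_le_one_of_exp_eq_one_sub_mul_add_mul_I ha (by linarith) him hexp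
  have hv : ‖-(a * (u + N * Complex.I))‖ ≤ 1 / 2 := by
    calc ‖-(a * (u + N * Complex.I))‖ = a * ‖u + N * Complex.I‖ := by
          rw [norm_neg, norm_mul, Complex.norm_of_nonneg ha]
      _ ≤ a * (N + 1) := by
          gcongr
          linarith [norm_add_mul_I_le hre₀ him]
      _ ≤ 1 / 2 := haN
  have hlog := Complex.norm_log_one_add_half_le_self hv
  rw [← sub_eq_add_neg, ← hexp, Complex.log_exp hu.1 hu.2] at hlog
  linarith

theorem im_neg_of_exp_eq_one_sub_mul_add_mul_I (ha : 0 < a) (hN : 1 < N) (hu : ‖u‖ ≤ 1)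
    (hexp : Complex.exp u = 1 - a * (u + N * Complex.I)) : u.im < 0 := by
  have him := neg_le_of_abs_le ((Complex.abs_im_le_norm u).trans hu)
  have hsin : Real.exp u.re * Real.sin u.im = -(a * (u.im + N)) := by
    rw [← Complex.exp_im, hexp]
    simp
  by_contra! hnonneg
  have := Real.sin_nonneg_of_nonneg_of_le_pi hnonneg
    (im_mem_Ioo_neg_pi_pi_of_norm_le_one hu).2.le
  nlinarith [mul_nonneg (Real.exp_pos u.re).le this]

theorem im_mem_Ioo_iff_norm_le_one_of_exp_eq_one_sub_mul_add_mul_I (ha : 0 < a) (hN : π ≤ N)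
    (haN : a * (N + 1) ≤ 1 / 2) (hexp : Complex.exp u = 1 - a * (u + N * Complex.I)) :
    u.im ∈ Set.Ioo (-π) 0 ↔ ‖u‖ ≤ 1 := by
  constructor
  · rintro ⟨him₁, him₂⟩
    have him : |u.im + N| ≤ N := abs_le.mpr ⟨by linarith [Real.pi_pos], by linarith⟩
    exact norm_le_one_of_exp_eq_one_sub_mul_add_mul_I ha.le haN
      ⟨him₁, by linarith [Real.pi_pos]⟩ him hexp
  · intro hu
    exact ⟨(im_mem_Ioo_neg_pi_pi_of_norm_le_one hu).1,
      im_neg_of_exp_eq_one_sub_mul_add_mul_I ha (by linarith [Real.pi_gt_three]) hu hexp⟩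

end Strip

section Rescaling

/-- The coordinate `u = i(tw - N)`. For `N = (n + 1)π` it is centred at the unperturbed zero
`w̄ₙ = N / t`, and its factor `i` turns `e^{itw}` into `± e^u`. -/
noncomputable def rescale (t N : ℝ) (w : ℂ) : ℂ :=
  Complex.I * (t * w - N)

theorem rescale_bijective {t : ℝ} (ht : t ≠ 0) (N : ℝ) : Function.Bijective (rescale t N) := by
  have ht' : (t : ℂ) ≠ 0 := Complex.ofReal_ne_zero.mpr ht
  exact (mulLeft_bijective₀ Complex.I Complex.I_ne_zero).comp
    ((Equiv.subRight (N : ℂ)).bijective.comp (mulLeft_bijective₀ (t : ℂ) ht'))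

theorem rescale_im_mem_Ioo_iff {t : ℝ} (ht : 0 < t) (n : ℕ) (w : ℂ) :
    (rescale t ((n + 1) * π) w).im ∈ Set.Ioo (-π) 0 ↔
      n * π / t < w.re ∧ w.re < (n + 1) * π / t := by
  have him : (rescale t ((n + 1) * π) w).im = t * w.re - (n + 1) * π := by
    rw [rescale, Complex.I_mul_im, Complex.sub_re, Complex.re_ofReal_mul, Complex.ofReal_re]
  rw [him, Set.mem_Ioo, div_lt_iff₀' ht, lt_div_iff₀' ht, neg_lt_sub_iff_lt_add, sub_neg]
  exact and_congr_left' (by rw [add_one_mul, add_comm π, add_lt_add_iff_right])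

theorem ite_Fplus_Fminus_eq (s t : ℝ) (n : ℕ) (w : ℂ) :
    (if Even n then Fplus s t w else Fminus s t w) =
      1 + Complex.I * (1 - Complex.exp (rescale t ((n + 1) * π) w)) / (s * w) := by
  have hexp : Complex.exp (rescale t ((n + 1) * π) w) =
      (-1) ^ (n + 1) * Complex.exp (Complex.I * t * w) := by
    rw [← Complex.exp_antiperiodic.sub_nat_mul_eq (n + 1), rescale]
    congr 1
    push_cast
    ring
  rw [hexp, pow_succ]
  split_ifs with hn
  · rw [Fplus, hn.neg_one_pow]
    ring
  · rw [Fminus, (Nat.not_even_iff_odd.mp hn).neg_one_pow]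
    ring

theorem ite_Fplus_Fminus_eq_zero_iff {s t : ℝ} (hs : s ≠ 0) (ht : t ≠ 0) (n : ℕ) {w : ℂ}
    (hw : w ≠ 0) :
    (if Even n then Fplus s t w else Fminus s t w) = 0 ↔
      Complex.exp (rescale t ((n + 1) * π) w) =
        1 - (s / t : ℝ) * (rescale t ((n + 1) * π) w + ((n + 1) * π : ℝ) * Complex.I) := by
  have hsw : (s * w : ℂ) ≠ 0 := mul_ne_zero (Complex.ofReal_ne_zero.mpr hs) hw
  have ht' : (t : ℂ) ≠ 0 := Complex.ofReal_ne_zero.mpr ht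
  have hrhs : ((s / t : ℝ) : ℂ) *
      (rescale t ((n + 1) * π) w + ((n + 1) * π : ℝ) * Complex.I) = Complex.I * (s * w) := by
    rw [rescale, Complex.ofReal_div]
    field_simp
    ring
  rw [ite_Fplus_Fminus_eq, hrhs]
  generalize Complex.exp (rescale t ((n + 1) * π) w) = E
  rw [← mul_left_inj' hsw, zero_mul, add_mul, one_mul, div_mul_cancel₀ _ hsw]
  constructor <;> intro h
  · linear_combination Complex.I * h - (1 - E) * Complex.I_sq
  · linear_combination -Complex.I * h + s * w * Complex.I_sq

theorem mem_strip_and_ite_Fplus_Fminus_eq_zero_iff {s t : ℝ} (hs : 0 < s) (ht : 0 < t) (n : ℕ)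
    (hsN : s / t * ((n + 1) * π + 1) ≤ 1 / 2) (w : ℂ) :
    ((n * π / t < w.re ∧ w.re < (n + 1) * π / t) ∧
      (if Even n then Fplus s t w else Fminus s t w) = 0) ↔
    ‖rescale t ((n + 1) * π) w‖ ≤ 1 ∧ Complex.exp (rescale t ((n + 1) * π) w) =
      1 - (s / t : ℝ) * (rescale t ((n + 1) * π) w + ((n + 1) * π : ℝ) * Complex.I) := by
  have hN : π ≤ (n + 1) * π := le_mul_of_one_le_left Real.pi_pos.le (by simp)
  have hF : (rescale t ((n + 1) * π) w).im ∈ Set.Ioo (-π) 0 →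
      ((if Even n then Fplus s t w else Fminus s t w) = 0 ↔ _) := fun h =>
    ite_Fplus_Fminus_eq_zero_iff hs.ne' ht.ne' n fun hw => by
      have hre := ((rescale_im_mem_Ioo_iff ht n w).mp h).1
      rw [hw, Complex.zero_re] at hre
      exact hre.not_ge (by positivity)
  rw [← rescale_im_mem_Ioo_iff ht, and_congr_right hF]
  exact and_congr_left
    (im_mem_Ioo_iff_norm_le_one_of_exp_eq_one_sub_mul_add_mul_I (by positivity) hN hsN)

theorem sub_expansion_eq_rescale_sub_div {t : ℝ} (ht : t ≠ 0) (s N : ℝ) (w : ℂ) :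
    w - ((N / t : ℝ) : ℂ) * (1 - (s / t : ℝ) + ((s / t : ℝ)) ^ 2
        - Complex.I * ((s ^ 2 / (2 * t) : ℝ)) * ((N / t : ℝ) : ℂ)) =
      (rescale t N w - (-((s / t : ℝ) * (N * Complex.I)) + (s / t : ℝ) ^ 2 * (N * Complex.I)
        - (s / t : ℝ) ^ 2 * (N * Complex.I) ^ 2 / 2)) / (Complex.I * t) := by
  have ht' : (t : ℂ) ≠ 0 := Complex.ofReal_ne_zero.mpr ht
  rw [rescale]
  push_cast
  field_simp [Complex.I_ne_zero]
  ring

theorem norm_ofReal_mul_norm_ofReal_mul_I_add_one {a N : ℝ} (ha : 0 ≤ a) (hN : 0 ≤ N) :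
    ‖(a : ℂ)‖ * (‖(N * Complex.I : ℂ)‖ + 1) = a * (N + 1) := by
  rw [norm_mul, Complex.norm_I, mul_one, Complex.norm_of_nonneg ha, Complex.norm_of_nonneg hN]

end Rescaling

/-- Second-order perturbative location of the unique zero with real part in
`(nπ/t, (n+1)π/t)` of `F₊` (`n` even) or `F₋` (`n` odd), for small `s > 0`:
`w(s) = w̄ₙ(1 − s/t + (s/t)² − i(s²/(2t))w̄ₙ) + O(s³)` with `w̄ₙ = (n+1)π/t`. -/
theorem stmt3 (t : ℝ) (ht : 0 < t) (n : ℕ) :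
    ∃ sn > (0 : ℝ), ∃ C > (0 : ℝ), ∀ s : ℝ, 0 < s → s < sn →
      (∃! w : ℂ, (n * π / t < w.re ∧ w.re < (n + 1) * π / t) ∧
        (if Even n then Fplus s t w else Fminus s t w) = 0) ∧
      (∀ w : ℂ, (n * π / t < w.re ∧ w.re < (n + 1) * π / t) →
        (if Even n then Fplus s t w else Fminus s t w) = 0 →
        ‖w - (((n + 1) * π / t : ℝ) : ℂ) *
            (1 - (s / t : ℝ) + ((s / t : ℝ)) ^ 2
              - Complex.I * ((s ^ 2 / (2 * t) : ℝ)) * (((n + 1) * π / t : ℝ) : ℂ))‖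
          ≤ C * s ^ 3) := by
  have hN : 0 ≤ (n + 1) * π := by positivity
  refine ⟨t / (2 * ((n + 1) * π + 1)), by positivity,
    5 * ((n + 1) * π + 1) ^ 3 / t ^ 4, by positivity, ?_⟩
  intro s hs hsn
  have hsN : s / t * ((n + 1) * π + 1) < 1 / 2 := by
    rw [lt_div_iff₀ (by positivity)] at hsn
    rw [div_mul_eq_mul_div, div_lt_iff₀ ht]
    linarith
  have hcoeff := norm_ofReal_mul_norm_ofReal_mul_I_add_one (div_pos hs ht).le hN
  have hzero := mem_strip_and_ite_Fplus_Fminus_eq_zero_iff hs ht n hsN.le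
  constructor
  · simp only [hzero]
    exact (rescale_bijective ht.ne' _).existsUnique_iff.mp
      (existsUnique_exp_eq_one_sub_mul_add (hcoeff.trans_lt hsN))
  · intro w hw hFw
    obtain ⟨hu, hexp⟩ := (hzero w).mp ⟨hw, hFw⟩
    rw [sub_expansion_eq_rescale_sub_div ht.ne', norm_div, norm_mul, Complex.norm_I, one_mul,
      Complex.norm_of_nonneg ht.le, div_le_iff₀ ht]
    have hquad := norm_sub_quadratic_le_of_exp_eq_one_sub_mul_add (hcoeff.trans_le hsN.le) hu hexp
    rw [hcoeff] at hquad
    refine hquad.trans_eq ?_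
    field_simp
end

section
/- For every real b > 0 and every w ∈ ℂ, one has √((b|w|)² + 1) · sinh(|Im w|) ≤ |g_b(w)| ≤ (b|w| + 1) · cosh(|Im w|). -/
/-- `g_b(w) = sin(w) + b·w·cos(w)` -/
noncomputable def gb (b : ℝ) (w : ℂ) : ℂ :=
  Complex.sin w + (b : ℂ) * w * Complex.cos w

/-!
With `c = b * w`, Euler's formulas give `2 g_b(w) = (c + i) exp(-iw) + (c - i) exp(iw)`, where the
two exponentials have modulus `exp(Im w)` and `exp(-Im w)`. The upper bound is the triangle
inequality together with `|c ± i| ≤ |c| + 1`. For the lower bound `g_b` is odd, so one may take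
`0 ≤ Im w`; then `c` lies in the closed upper half-plane, so that `|c - i| ≤ √(|c|² + 1) ≤ |c + i|`,
and the reverse triangle inequality leaves `√(|c|² + 1) (exp(Im w) - exp(-Im w))`.
-/

section SinAddMulCos

open Complex

theorem norm_add_I_sq (c : ℂ) : ‖c + I‖ ^ 2 = ‖c‖ ^ 2 + 1 + 2 * c.im := by
  simp only [Complex.sq_norm, normSq_add, normSq_I, conj_I, mul_neg, neg_re, mul_I_re, neg_neg]

theorem norm_sub_I_sq (c : ℂ) : ‖c - I‖ ^ 2 = ‖c‖ ^ 2 + 1 - 2 * c.im := by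
  simp only [Complex.sq_norm, normSq_sub, normSq_I, conj_I, mul_neg, neg_re, mul_I_re, neg_neg]

theorem sqrt_norm_sq_add_one_le_norm_add_I {c : ℂ} (hc : 0 ≤ c.im) :
    √(‖c‖ ^ 2 + 1) ≤ ‖c + I‖ :=
  Real.sqrt_le_iff.2 ⟨norm_nonneg _, by linarith [norm_add_I_sq c]⟩

theorem norm_sub_I_le_sqrt_norm_sq_add_one {c : ℂ} (hc : 0 ≤ c.im) :
    ‖c - I‖ ≤ √(‖c‖ ^ 2 + 1) :=
  Real.le_sqrt_of_sq_le (by linarith [norm_sub_I_sq c])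

theorem norm_exp_mul_I (w : ℂ) : ‖exp (w * I)‖ = Real.exp (-w.im) := by
  rw [norm_exp, mul_I_re]

theorem two_mul_sin_add_mul_cos (c w : ℂ) :
    2 * (sin w + c * cos w) = (c + I) * exp (-w * I) + (c - I) * exp (w * I) := by
  linear_combination two_sin w + c * two_cos w

theorem norm_sin_add_mul_cos_le (c w : ℂ) :
    ‖sin w + c * cos w‖ ≤ (‖c‖ + 1) * Real.cosh w.im := by
  have h_add : ‖c + I‖ ≤ ‖c‖ + 1 := by simpa only [norm_I] using norm_add_le c I
  have h_sub : ‖c - I‖ ≤ ‖c‖ + 1 := by simpa only [norm_I] using norm_sub_le c I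
  suffices 2 * ‖sin w + c * cos w‖ ≤ 2 * ((‖c‖ + 1) * Real.cosh w.im) by linarith
  calc 2 * ‖sin w + c * cos w‖
      = ‖(c + I) * exp (-w * I) + (c - I) * exp (w * I)‖ := by
        rw [← two_mul_sin_add_mul_cos, norm_mul, Complex.norm_two]
    _ ≤ ‖c + I‖ * Real.exp w.im + ‖c - I‖ * Real.exp (-w.im) := by
        simpa only [norm_mul, norm_exp_mul_I, neg_im, neg_neg] using
          norm_add_le ((c + I) * exp (-w * I)) ((c - I) * exp (w * I))
    _ ≤ (‖c‖ + 1) * Real.exp w.im + (‖c‖ + 1) * Real.exp (-w.im) := by gcongr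
    _ = 2 * ((‖c‖ + 1) * Real.cosh w.im) := by rw [Real.cosh_eq]; ring

theorem sqrt_mul_sinh_im_le_norm_sin_add_mul_cos {c : ℂ} (hc : 0 ≤ c.im) (w : ℂ) :
    √(‖c‖ ^ 2 + 1) * Real.sinh w.im ≤ ‖sin w + c * cos w‖ := by
  suffices 2 * (√(‖c‖ ^ 2 + 1) * Real.sinh w.im) ≤ 2 * ‖sin w + c * cos w‖ by linarith
  calc 2 * (√(‖c‖ ^ 2 + 1) * Real.sinh w.im)
      = √(‖c‖ ^ 2 + 1) * Real.exp w.im - √(‖c‖ ^ 2 + 1) * Real.exp (-w.im) := by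
        rw [Real.sinh_eq]; ring
    _ ≤ ‖c + I‖ * Real.exp w.im - ‖c - I‖ * Real.exp (-w.im) := by
        gcongr
        · exact sqrt_norm_sq_add_one_le_norm_add_I hc
        · exact norm_sub_I_le_sqrt_norm_sq_add_one hc
    _ ≤ ‖(c + I) * exp (-w * I) + (c - I) * exp (w * I)‖ := by
        simpa only [norm_mul, norm_exp_mul_I, neg_im, neg_neg] using
          norm_sub_le_norm_add ((c + I) * exp (-w * I)) ((c - I) * exp (w * I))
    _ = 2 * ‖sin w + c * cos w‖ := by
        rw [← two_mul_sin_add_mul_cos, norm_mul, Complex.norm_two]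

end SinAddMulCos

theorem gb_neg (b : ℝ) (w : ℂ) : gb b (-w) = -gb b w := by
  rw [gb, gb, Complex.sin_neg, Complex.cos_neg]
  ring

theorem norm_ofReal_mul_of_nonneg {b : ℝ} (hb : 0 ≤ b) (w : ℂ) : ‖(b : ℂ) * w‖ = b * ‖w‖ := by
  rw [norm_mul, Complex.norm_of_nonneg hb]

theorem sqrt_mul_sinh_abs_im_le_norm_gb {b : ℝ} (hb : 0 ≤ b) (w : ℂ) :
    √((b * ‖w‖) ^ 2 + 1) * Real.sinh |w.im| ≤ ‖gb b w‖ := by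
  wlog hw : 0 ≤ w.im generalizing w
  · have h_neg : 0 ≤ (-w).im := by rw [Complex.neg_im]; linarith
    simpa only [gb_neg, norm_neg, Complex.neg_im, abs_neg] using this (-w) h_neg
  have hc : 0 ≤ ((b : ℂ) * w).im := by
    rw [Complex.im_ofReal_mul]
    exact mul_nonneg hb hw
  rw [abs_of_nonneg hw, ← norm_ofReal_mul_of_nonneg hb]
  exact sqrt_mul_sinh_im_le_norm_sin_add_mul_cos hc w

theorem norm_gb_le_mul_cosh_im {b : ℝ} (hb : 0 ≤ b) (w : ℂ) :
    ‖gb b w‖ ≤ (b * ‖w‖ + 1) * Real.cosh w.im := by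
  rw [← norm_ofReal_mul_of_nonneg hb]
  exact norm_sin_add_mul_cos_le (b * w) w

/-- Growth bounds for `g_b` away from the real axis:
`√((b|w|)² + 1)·sinh|Im w| ≤ |g_b(w)| ≤ (b|w| + 1)·cosh|Im w|`. -/
theorem stmt4 (b : ℝ) (hb : 0 < b) (w : ℂ) :
    Real.sqrt ((b * ‖w‖) ^ 2 + 1) * Real.sinh |w.im| ≤ ‖gb b w‖ ∧
      ‖gb b w‖ ≤ (b * ‖w‖ + 1) * Real.cosh |w.im| := by
  rw [Real.cosh_abs]
  exact ⟨sqrt_mul_sinh_abs_im_le_norm_gb hb.le w, norm_gb_le_mul_cosh_im hb.le w⟩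
end

section
/- Fix real κ > 0 and η > 0, and set c = 3π/4. There exists l₀ > κ such that for every l > l₀ the following holds: if w ∈ ℂ, w ∉ (−∞, 0], D̂_l(w) = 0, and φ ∈ (−π, π) is the principal argument of w, then, writing r = |w|² (so that z = w² has modulus r and argument θ = 2φ ∈ (−2π, 2π)), either 0 > 2φ > −c·l⁻¹·r^{−1/2}·log(l + r) or −2π < 2φ < −2π + c·l⁻¹·r^{−1/2}·log(l + r) (log denotes the natural logarithm). -/
open Real

/-- The resonance determinant `D̂_l(w)` of the Hamiltonian
`p² + η⁻¹(δ_κ + δ_{−κ})` on `L²((−∞, l))` with a Dirichlet boundary condition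
at `l`, in the variable `w = √z`. -/
noncomputable def Dhat (κ η l : ℝ) (w : ℂ) : ℂ :=
  1 + Complex.I * (1 - Complex.exp (2 * Complex.I * l * w) * Complex.cos (2 * κ * w)) / (η * w)
    - Complex.exp (Complex.I * (κ + l) * w) * Complex.sin ((κ - l) * w) * Complex.sin (2 * κ * w)
        / (η ^ 2 * w ^ 2)

/-!
With `u = 2iηw`, a zero of `D̂_l` is a solution of `G · N = D`, where `N` and `D` are the numerator
and denominator of the reflection amplitude of the pair of point interactions, up to sign, and
`G = e^{2i(l−κ)w}` is the phase acquired between `κ` and the wall at `l`. In the closed upper half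
plane the pair reflects strictly less than it receives while `|G| ≤ 1`, so there are no zeros. In
the lower half plane with `y = −Im w`, comparing the sizes of the two sides gives
`4κy e^{2ly} ≤ 1 + 2η|w| + e^{4κy}`. Write `E = e^{2ly/3}`. If `l + |w|² ≤ E²`, then for large `l`
the right-hand side is at most `2(1 + η)E`, while the left-hand side `4κy E³` is at least
`4κyl · E ≥ 3κ (log l) E`, a contradiction. Hence `l + |w|² > E²`, which is a logarithmic strip
below the real axis, and Jordan's inequality turns it into a bound on the argument.
-/

/-- The phase `e^{2iaw}` acquired by a wave of wave number `w` over a distance `a` and back. -/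
noncomputable def roundTripPhase (a : ℝ) (w : ℂ) : ℂ :=
  Complex.exp (2 * Complex.I * a * w)

/-- Numerator of minus the reflection amplitude of two equal point interactions, in terms of
`u = 2iηw` and the round-trip phase `B` between them. A single interaction has reflection amplitude
`-1 / (1 - u)` and transmission amplitude `-u / (1 - u)`. -/
def reflectionNum (u B : ℂ) : ℂ :=
  1 - u - B * (1 + u)

/-- Denominator of the reflection amplitude of two equal point interactions; see `reflectionNum`. -/
def reflectionDen (u B : ℂ) : ℂ :=
  (1 - u) ^ 2 - B

theorem norm_roundTripPhase (a : ℝ) (w : ℂ) :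
    ‖roundTripPhase a w‖ = Real.exp (-(2 * a * w.im)) := by
  simp [roundTripPhase, Complex.norm_exp]

theorem exp_mul_cos_eq_roundTripPhase (a : ℝ) (w : ℂ) :
    Complex.exp (Complex.I * a * w) * Complex.cos (a * w) = (roundTripPhase a w + 1) / 2 := by
  rw [Complex.cos, roundTripPhase, mul_div_assoc', mul_add, ← Complex.exp_add, ← Complex.exp_add,
    ← Complex.exp_zero]
  ring_nf

theorem exp_mul_sin_eq_roundTripPhase (a : ℝ) (w : ℂ) :
    Complex.exp (Complex.I * a * w) * Complex.sin (a * w) =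
      (1 - roundTripPhase a w) * Complex.I / 2 := by
  rw [Complex.sin, roundTripPhase, mul_div_assoc', ← mul_assoc, mul_sub, ← Complex.exp_add,
    ← Complex.exp_add, ← Complex.exp_zero]
  ring_nf

theorem exp_mul_cos_eq_mul_roundTripPhase (κ l : ℝ) (w : ℂ) :
    Complex.exp (2 * Complex.I * l * w) * Complex.cos (2 * κ * w) =
      roundTripPhase (l - κ) w * (roundTripPhase (2 * κ) w + 1) / 2 := by
  have hcos := exp_mul_cos_eq_roundTripPhase (2 * κ) w
  have hexp : Complex.exp (2 * Complex.I * l * w) =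
      roundTripPhase (l - κ) w * Complex.exp (Complex.I * ↑(2 * κ) * w) := by
    rw [roundTripPhase, ← Complex.exp_add]
    push_cast
    ring_nf
  rw [hexp, mul_assoc, mul_div_assoc, ← hcos]
  push_cast
  rfl

theorem exp_mul_sin_mul_sin_eq_mul_roundTripPhase (κ l : ℝ) (w : ℂ) :
    Complex.exp (Complex.I * (κ + l) * w) * Complex.sin ((κ - l) * w) * Complex.sin (2 * κ * w) =
      (1 - roundTripPhase (l - κ) w) * (1 - roundTripPhase (2 * κ) w) / 4 := by
  have hsin₁ := exp_mul_sin_eq_roundTripPhase (l - κ) w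
  have hsin₂ := exp_mul_sin_eq_roundTripPhase (2 * κ) w
  have hexp : Complex.exp (Complex.I * (κ + l) * w) =
      Complex.exp (Complex.I * ↑(l - κ) * w) * Complex.exp (Complex.I * ↑(2 * κ) * w) := by
    rw [← Complex.exp_add]
    push_cast
    ring_nf
  have hneg : Complex.sin ((κ - l) * w) = -Complex.sin (↑(l - κ) * w) := by
    rw [← Complex.sin_neg]
    push_cast
    ring_nf
  have hcast : (2 * κ : ℂ) = ↑(2 * κ) := by push_cast; rfl
  rw [hexp, hneg, hcast]
  linear_combination -(Complex.exp (Complex.I * ↑(2 * κ) * w) * Complex.sin (↑(2 * κ) * w)) * hsin₁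
    - (1 - roundTripPhase (l - κ) w) * Complex.I / 2 * hsin₂
    - (1 - roundTripPhase (l - κ) w) * (1 - roundTripPhase (2 * κ) w) / 4 * Complex.I_sq

theorem sq_mul_Dhat {η : ℝ} (hη : η ≠ 0) (κ l : ℝ) {w : ℂ} (hw : w ≠ 0) :
    (2 * Complex.I * η * w) ^ 2 * Dhat κ η l w =
      reflectionDen (2 * Complex.I * η * w) (roundTripPhase (2 * κ) w) -
        roundTripPhase (l - κ) w *
          reflectionNum (2 * Complex.I * η * w) (roundTripPhase (2 * κ) w) := by
  have hη' : (η : ℂ) ≠ 0 := Complex.ofReal_ne_zero.2 hη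
  rw [Dhat, exp_mul_cos_eq_mul_roundTripPhase, exp_mul_sin_mul_sin_eq_mul_roundTripPhase,
    reflectionDen, reflectionNum]
  generalize roundTripPhase (l - κ) w = G
  generalize roundTripPhase (2 * κ) w = B
  field_simp
  ring_nf
  simp only [Complex.I_sq, Complex.I_pow_three]
  ring

theorem Dhat_eq_zero_iff {κ η l : ℝ} (hη : η ≠ 0) {w : ℂ} (hw : w ≠ 0) :
    Dhat κ η l w = 0 ↔
      roundTripPhase (l - κ) w *
          reflectionNum (2 * Complex.I * η * w) (roundTripPhase (2 * κ) w) =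
        reflectionDen (2 * Complex.I * η * w) (roundTripPhase (2 * κ) w) := by
  have hu : (2 * Complex.I * η * w) ^ 2 ≠ 0 := by simp [hη, hw]
  rw [← mul_eq_zero_iff_left hu, sq_mul_Dhat hη κ l hw, sub_eq_zero, eq_comm]

/- This is the flux balance at the interaction facing the incoming wave, of amplitude
`reflectionDen u B`: the terms `u * (1 - u)` and `u * B` are the amplitudes it sends into the gap
and receives back from it, and the term with `u.re` is the flux it absorbs. -/
theorem norm_reflectionDen_sq_sub_norm_reflectionNum_sq (u B : ℂ) :
    ‖reflectionDen u B‖ ^ 2 - ‖reflectionNum u B‖ ^ 2 =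
      ‖u‖ ^ 2 * (‖1 - u‖ ^ 2 - ‖B‖ ^ 2) - 2 * u.re * ‖1 - u - B‖ ^ 2 := by
  simp only [reflectionDen, reflectionNum, Complex.sq_norm, Complex.normSq_apply, sq (1 - u),
    Complex.add_re, Complex.add_im, Complex.sub_re, Complex.sub_im, Complex.mul_re, Complex.mul_im,
    Complex.one_re, Complex.one_im]
  ring

theorem one_lt_norm_one_sub {u : ℂ} (hre : u.re ≤ 0) (hu : u ≠ 0) : 1 < ‖1 - u‖ := by
  have hnormSq : 0 < Complex.normSq u := Complex.normSq_pos.2 hu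
  rw [← one_lt_sq_iff₀ (norm_nonneg _), Complex.sq_norm, Complex.normSq_sub]
  simp only [map_one, one_mul, Complex.conj_re]
  linarith

theorem norm_reflectionNum_lt_norm_reflectionDen {u B : ℂ} (hre : u.re ≤ 0) (hu : u ≠ 0)
    (hB : ‖B‖ ≤ 1) : ‖reflectionNum u B‖ < ‖reflectionDen u B‖ := by
  have hgap : 0 < ‖1 - u‖ ^ 2 - ‖B‖ ^ 2 :=
    sub_pos.2 <| pow_lt_pow_left₀ (hB.trans_lt (one_lt_norm_one_sub hre hu)) (norm_nonneg B)
      two_ne_zero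
  have hflux : 0 < ‖u‖ ^ 2 * (‖1 - u‖ ^ 2 - ‖B‖ ^ 2) := by positivity
  have hloss : 2 * u.re * ‖1 - u - B‖ ^ 2 ≤ 0 :=
    mul_nonpos_of_nonpos_of_nonneg (by linarith) (by positivity)
  refine lt_of_pow_lt_pow_left₀ 2 (norm_nonneg _) ?_
  linarith [norm_reflectionDen_sq_sub_norm_reflectionNum_sq u B]

theorem im_neg_of_Dhat_eq_zero {κ η l : ℝ} (hκ : 0 ≤ κ) (hη : 0 < η) (hl : κ ≤ l) {w : ℂ}
    (hw : w ≠ 0) (h : Dhat κ η l w = 0) : w.im < 0 := by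
  by_contra! him
  have hu : 2 * Complex.I * η * w ≠ 0 := by simp [hη.ne', hw]
  have hre : (2 * Complex.I * η * w).re ≤ 0 := by
    simpa using mul_nonneg (by positivity) him
  have norm_phase_le {a : ℝ} (ha : 0 ≤ a) : ‖roundTripPhase a w‖ ≤ 1 := by
    rw [norm_roundTripPhase, Real.exp_le_one_iff, neg_nonpos]
    positivity
  have hlt := norm_reflectionNum_lt_norm_reflectionDen hre hu
    (norm_phase_le (a := 2 * κ) (by positivity))
  rw [← (Dhat_eq_zero_iff hη.ne' hw).1 h, norm_mul] at hlt
  exact hlt.not_ge <|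
    mul_le_of_le_one_left (norm_nonneg _) (norm_phase_le (sub_nonneg.2 hl))

theorem one_le_norm_one_add {u : ℂ} (hre : 0 ≤ u.re) : 1 ≤ ‖1 + u‖ := by
  refine le_trans ?_ (Complex.re_le_norm _)
  simpa using hre

theorem norm_one_sub_le_norm_one_add {u : ℂ} (hre : 0 ≤ u.re) : ‖1 - u‖ ≤ ‖1 + u‖ := by
  refine le_of_sq_le_sq ?_ (norm_nonneg _)
  rw [Complex.sq_norm, Complex.sq_norm, Complex.normSq_sub, Complex.normSq_add]
  simp only [map_one, one_mul, Complex.conj_re]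
  linarith

theorem norm_sub_one_mul_le_norm_reflectionNum {u : ℂ} (hre : 0 ≤ u.re) (B : ℂ) :
    (‖B‖ - 1) * ‖1 + u‖ ≤ ‖reflectionNum u B‖ :=
  calc (‖B‖ - 1) * ‖1 + u‖ ≤ ‖B * (1 + u)‖ - ‖1 - u‖ := by
        rw [norm_mul, sub_one_mul]
        gcongr
        exact norm_one_sub_le_norm_one_add hre
    _ ≤ ‖B * (1 + u) - (1 - u)‖ := norm_sub_norm_le _ _
    _ = ‖reflectionNum u B‖ := norm_sub_rev _ _

theorem norm_reflectionDen_le {u : ℂ} (hre : 0 ≤ u.re) (B : ℂ) :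
    ‖reflectionDen u B‖ ≤ (‖1 + u‖ + ‖B‖) * ‖1 + u‖ :=
  calc ‖reflectionDen u B‖ ≤ ‖1 - u‖ ^ 2 + ‖B‖ := by
        rw [← norm_pow]
        exact norm_sub_le _ _
    _ ≤ ‖1 + u‖ ^ 2 + ‖B‖ * ‖1 + u‖ := by
        gcongr
        · exact norm_one_sub_le_norm_one_add hre
        · exact le_mul_of_one_le_right (norm_nonneg B) (one_le_norm_one_add hre)
    _ = (‖1 + u‖ + ‖B‖) * ‖1 + u‖ := by ring

theorem norm_mul_norm_sub_one_le_of_mul_reflectionNum_eq {u B G : ℂ} (hre : 0 ≤ u.re)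
    (h : G * reflectionNum u B = reflectionDen u B) :
    ‖G‖ * (‖B‖ - 1) ≤ ‖1 + u‖ + ‖B‖ := by
  have hpos : 0 < ‖1 + u‖ := one_pos.trans_le (one_le_norm_one_add hre)
  refine le_of_mul_le_mul_right ?_ hpos
  calc ‖G‖ * (‖B‖ - 1) * ‖1 + u‖ = ‖G‖ * ((‖B‖ - 1) * ‖1 + u‖) := mul_assoc _ _ _
    _ ≤ ‖G‖ * ‖reflectionNum u B‖ := by
        gcongr
        exact norm_sub_one_mul_le_norm_reflectionNum hre B
    _ = ‖reflectionDen u B‖ := by rw [← norm_mul, h]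
    _ ≤ (‖1 + u‖ + ‖B‖) * ‖1 + u‖ := norm_reflectionDen_le hre B

theorem four_mul_mul_exp_le_exp_mul_exp_sub_one {κ y : ℝ} (hκy : 0 ≤ κ * y) (l : ℝ) :
    4 * κ * y * Real.exp (2 * l * y) ≤
      Real.exp (2 * (l - κ) * y) * (Real.exp (4 * κ * y) - 1) :=
  calc 4 * κ * y * Real.exp (2 * l * y) = Real.exp (2 * l * y) * (2 * (2 * κ * y)) := by ring
    _ ≤ Real.exp (2 * l * y) * (2 * Real.sinh (2 * κ * y)) := by
        gcongr
        exact Real.self_le_sinh_iff.2 (by linarith)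
    _ = Real.exp (2 * (l - κ) * y) * (Real.exp (4 * κ * y) - 1) := by
        rw [Real.sinh_eq, mul_div_cancel₀ _ two_ne_zero, mul_sub_one, mul_sub, ← Real.exp_add,
          ← Real.exp_add, ← Real.exp_add]
        ring_nf

theorem mul_exp_le_of_Dhat_eq_zero {κ η l : ℝ} (hκ : 0 ≤ κ) (hη : 0 < η) {w : ℂ}
    (him : w.im < 0) (h : Dhat κ η l w = 0) :
    4 * κ * -w.im * Real.exp (2 * l * -w.im) ≤
      1 + 2 * η * ‖w‖ + Real.exp (4 * κ * -w.im) := by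
  have hw : w ≠ 0 := by
    rintro rfl
    exact him.ne Complex.zero_im
  have hre : 0 ≤ (2 * Complex.I * η * w).re := by
    simpa using mul_nonpos_of_nonneg_of_nonpos (by positivity) him.le
  have hnorm : ‖1 + 2 * Complex.I * η * w‖ ≤ 1 + 2 * η * ‖w‖ := by
    refine (norm_add_le _ _).trans_eq ?_
    simp [abs_of_pos hη]
  have hG : ‖roundTripPhase (l - κ) w‖ = Real.exp (2 * (l - κ) * -w.im) := by
    rw [norm_roundTripPhase, mul_neg]
  have hB : ‖roundTripPhase (2 * κ) w‖ = Real.exp (4 * κ * -w.im) := by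
    rw [norm_roundTripPhase]
    ring_nf
  have hbalance := norm_mul_norm_sub_one_le_of_mul_reflectionNum_eq hre
    ((Dhat_eq_zero_iff hη.ne' hw).1 h)
  rw [hG, hB] at hbalance
  have hsinh := four_mul_mul_exp_le_exp_mul_exp_sub_one (mul_nonneg hκ (neg_pos.2 him).le) l
  linarith

theorem one_add_mul_add_exp_lt_mul_exp {κ η l R y : ℝ} (hκ : 0 < κ) (hη : 0 ≤ η)
    (hl : 6 * κ ≤ l) (hlog : 1 + η < κ * Real.log l)
    (hy : 3 / 4 * Real.log (l + R ^ 2) / l ≤ y) :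
    1 + 2 * η * R + Real.exp (4 * κ * y) < 4 * κ * y * Real.exp (2 * l * y) := by
  have hl0 : 0 < l := by linarith
  have log_le : Real.log l ≤ Real.log (l + R ^ 2) := Real.log_le_log hl0 (by nlinarith)
  have log_le_mul : Real.log (l + R ^ 2) ≤ 4 / 3 * (l * y) := by
    rw [div_le_iff₀ hl0] at hy
    linarith
  have log_pos : 0 < Real.log l := pos_of_mul_pos_right (by linarith) hκ.le
  have hly : 0 < l * y := by linarith
  have hy0 : 0 < y := pos_of_mul_pos_right hly hl0.le
  set E := Real.exp (2 / 3 * (l * y)) with hE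
  have one_le_E : 1 ≤ E := Real.one_le_exp (by positivity)
  have le_E_sq : l + R ^ 2 ≤ E ^ 2 := by
    rw [hE, ← Real.exp_nat_mul, ← Real.log_le_iff_le_exp (by positivity)]
    push_cast
    linarith
  have R_le_E : R ≤ E := le_of_sq_le_sq (by linarith) (by positivity)
  have exp_le_E : Real.exp (4 * κ * y) ≤ E := by
    rw [hE, Real.exp_le_exp]
    nlinarith
  have coeff_lt : 2 * (1 + η) < 4 * κ * y * l := by nlinarith
  calc 1 + 2 * η * R + Real.exp (4 * κ * y) ≤ E + 2 * η * E + E := by gcongr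
    _ = 2 * (1 + η) * E := by ring
    _ < 4 * κ * y * l * E := by gcongr
    _ ≤ 4 * κ * y * E ^ 2 * E := by
        gcongr
        linarith [sq_nonneg R]
    _ = 4 * κ * y * Real.exp (2 * l * y) := by
        rw [mul_assoc, ← pow_succ, hE, ← Real.exp_nat_mul]
        push_cast
        ring_nf

theorem neg_im_lt_of_Dhat_eq_zero {κ η l : ℝ} (hκ : 0 < κ) (hη : 0 < η) (hl : 6 * κ ≤ l)
    (hlog : 1 + η < κ * Real.log l) {w : ℂ} (him : w.im < 0) (h : Dhat κ η l w = 0) :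
    -w.im < 3 / 4 * Real.log (l + ‖w‖ ^ 2) / l := by
  by_contra! hle
  exact (mul_exp_le_of_Dhat_eq_zero hκ.le hη him h).not_gt
    (one_add_mul_add_exp_lt_mul_exp hκ hη.le hl hlog hle)

theorem min_le_pi_div_two_mul_sin {x : ℝ} (hx₀ : 0 ≤ x) (hxπ : x ≤ π) :
    min x (π - x) ≤ π / 2 * Real.sin x := by
  have jordan {t : ℝ} (ht₀ : 0 ≤ t) (ht : t ≤ π / 2) : t ≤ π / 2 * Real.sin t := by
    calc t = π / 2 * (2 / π * t) := by field_simp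
      _ ≤ π / 2 * Real.sin t := by
          gcongr
          exact Real.mul_le_sin ht₀ ht
  rcases le_total x (π / 2) with hx | hx
  · exact min_le_of_left_le (jordan hx₀ hx)
  · refine min_le_of_right_le ?_
    rw [← Real.sin_pi_sub]
    exact jordan (by linarith) (by linarith)

theorem min_neg_arg_le_of_im_neg {w : ℂ} (him : w.im < 0) :
    min (-Complex.arg w) (π + Complex.arg w) ≤ π / 2 * (-w.im / ‖w‖) := by
  have hsin : Real.sin (-Complex.arg w) = -w.im / ‖w‖ := by
    rw [Real.sin_neg, Complex.sin_arg, neg_div]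
  rw [← hsin, ← sub_neg_eq_add]
  exact min_le_pi_div_two_mul_sin (neg_pos.2 (Complex.arg_neg_iff.2 him)).le
    (by linarith [Complex.neg_pi_lt_arg w])

theorem sq_rpow_neg_one_div_two {x : ℝ} (hx : 0 ≤ x) : (x ^ 2) ^ (-(1 : ℝ) / 2) = x⁻¹ := by
  rw [← Real.rpow_natCast, ← Real.rpow_mul hx, ← Real.rpow_neg_one]
  norm_num

/-- For large `l`, all zeros of `D̂_l` (with `w` off the negative real axis,
`φ = Arg w`, `r = |w|²`, i.e. `z = w²` has argument `θ = 2φ ∈ (−2π, 2π)`)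
are localized near the rays `θ = 0` and `θ = −2π`, with `c = 3π/4`. -/
theorem stmt5 (κ η : ℝ) (hκ : 0 < κ) (hη : 0 < η) :
    ∃ l₀ > κ, ∀ l > l₀, ∀ w : ℂ,
      w ∉ {x : ℂ | x.im = 0 ∧ x.re ≤ 0} → Dhat κ η l w = 0 →
      ((0 > 2 * Complex.arg w ∧
          2 * Complex.arg w >
            -((3 * π / 4) * l⁻¹ * (‖w‖ ^ 2) ^ (-(1 : ℝ) / 2) *
              Real.log (l + ‖w‖ ^ 2))) ∨
       (-(2 * π) < 2 * Complex.arg w ∧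
          2 * Complex.arg w <
            -(2 * π) + (3 * π / 4) * l⁻¹ * (‖w‖ ^ 2) ^ (-(1 : ℝ) / 2) *
              Real.log (l + ‖w‖ ^ 2))) := by
  refine ⟨max (6 * κ) (Real.exp ((1 + η) / κ)), lt_max_of_lt_left (by linarith), ?_⟩
  intro l hl w hwslit h
  obtain ⟨hlκ, hlexp⟩ := max_lt_iff.1 hl
  have hw : w ≠ 0 := by
    rintro rfl
    simp at hwslit
  have hlog : 1 + η < κ * Real.log l := by
    rwa [← div_lt_iff₀' hκ, Real.lt_log_iff_exp_lt (by linarith)]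
  have him : w.im < 0 := im_neg_of_Dhat_eq_zero hκ.le hη (by linarith) hw h
  have hstrip := neg_im_lt_of_Dhat_eq_zero hκ hη hlκ.le hlog him h
  have hmin : min (-Complex.arg w) (π + Complex.arg w) <
      π / 2 * (3 / 4 * Real.log (l + ‖w‖ ^ 2) / l / ‖w‖) := by
    refine (min_neg_arg_le_of_im_neg him).trans_lt ?_
    gcongr
  have hbound : 2 * (π / 2 * (3 / 4 * Real.log (l + ‖w‖ ^ 2) / l / ‖w‖)) =
      (3 * π / 4) * l⁻¹ * (‖w‖ ^ 2) ^ (-(1 : ℝ) / 2) * Real.log (l + ‖w‖ ^ 2) := by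
    rw [sq_rpow_neg_one_div_two (norm_nonneg w)]
    ring
  have harg : Complex.arg w < 0 := Complex.arg_neg_iff.2 him
  have hargπ : -π < Complex.arg w := Complex.neg_pi_lt_arg w
  rw [← hbound]
  exact (min_lt_iff.1 hmin).imp (fun hlt ↦ ⟨by linarith, by linarith⟩)
    (fun hlt ↦ ⟨by linarith, by linarith⟩)
end
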